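/- Let e be a unit vector of the 9-dimensional Euclidean space ℝ⁹ and let p be a real number with 0 ≤ p < 6. Then the function z ↦ ‖z − e‖^{−7} · ‖z‖^{p−8} is Lebesgue-integrable on ℝ⁹, and (3 Γ(7/2) / (2 π^{9/2})) · ∫_{ℝ⁹} ‖z − e‖^{−7} ‖z‖^{p−8} dz = (6/7) · ( 1/(p+1) + 1/(6−p) ). -/

import Mathlib

open MeasureTheory

namespace NewtonAux
open Real Set

abbrev E9 := EuclideanSpace ℝ (Fin 9)

lemma lint_of_real {α : Type*} [MeasurableSpace α] {μ : Measure α} {f : α → ℝ} {c : ℝ}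
    (h0 : 0 ≤ᵐ[μ] f) (hc : ∫ x, f x ∂μ = c) (hpos : 0 < c) :
    ∫⁻ x, ENNReal.ofReal (f x) ∂μ = ENNReal.ofReal c := by
  have hi : Integrable f μ := .of_integral_ne_zero (by rw [hc]; exact hpos.ne')
  rw [← hc, ofReal_integral_eq_lintegral_ofReal hi h0]

lemma lint_gamma {a r c : ℝ} (ha : 0 < a) (hr : 0 < r) (hc : 0 ≤ c) :
    ∫⁻ t in Ioi (0:ℝ), ENNReal.ofReal (c * (t ^ (a - 1) * exp (-(r * t)))) =
      ENNReal.ofReal (c * ((1 / r) ^ a * Gamma a)) := by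
  have hG := Gamma_pos_of_pos ha
  simp_rw [ENNReal.ofReal_mul hc]
  rw [lintegral_const_mul _ (by fun_prop), lint_of_real (c := (1 / r) ^ a * Gamma a)]
  · filter_upwards [ae_restrict_mem measurableSet_Ioi] with t (ht : 0 < t)
    simp only [Pi.zero_apply]; positivity
  · exact integral_rpow_mul_exp_neg_mul_Ioi ha hr
  · positivity

lemma lint_pow {m : ℝ} (hm : m < -1) {c : ℝ} (hc : 0 ≤ c) :
    ∫⁻ w in Ioi (0:ℝ), ENNReal.ofReal (c * (w + 1) ^ m) =
      ENNReal.ofReal (c * (-1 / (m + 1))) := by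
  simp_rw [ENNReal.ofReal_mul hc]
  rw [lintegral_const_mul _ (by fun_prop), lint_of_real (c := -1 / (m + 1))]
  · filter_upwards [ae_restrict_mem measurableSet_Ioi] with t (ht : 0 < t)
    simp only [Pi.zero_apply]; positivity
  · have h := integral_Ioi_rpow_of_lt hm one_pos
    rw [one_rpow] at h
    rw [← h]
    have := (measurePreserving_add_right (volume : Measure ℝ) 1).setIntegral_preimage_emb
      (measurableEmbedding_addRight 1) (fun x => x ^ m) (Ioi 1)
    simpa using this
  · exact div_pos_of_neg_of_neg (by norm_num) (by linarith)

lemma lint_gauss (e : E9) (he : ‖e‖ = 1) {t w c : ℝ} (ht : 0 < t) (hw : 0 < w) (hc : 0 ≤ c) :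
    ∫⁻ z : E9, ENNReal.ofReal (c * (exp (-(‖z - e‖ ^ 2 * t)) * exp (-(t * ‖z‖ ^ 2 * w)))) =
      ENNReal.ofReal (c * exp (-(w / (w + 1) * t)) * (π / (t * (w + 1))) ^ ((9:ℝ) / 2)) := by
  have hb : 0 < t * (w + 1) := by positivity
  have key : ∀ z : E9, c * (exp (-(‖z - e‖ ^ 2 * t)) * exp (-(t * ‖z‖ ^ 2 * w))) =
      c * exp (-(w / (w + 1) * t)) *
        exp (-(t * (w + 1)) * ‖z - (1 / (w + 1)) • e‖ ^ 2) := by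
    intro z
    rw [mul_assoc c, ← exp_add, ← exp_add]
    congr 2
    rw [norm_sub_sq_real, norm_sub_sq_real, inner_smul_right, norm_smul, he]
    simp only [norm_eq_abs, mul_one, sq_abs]
    field_simp
    ring
  simp_rw [key]
  rw [lintegral_sub_right_eq_self (μ := (volume : Measure E9)) (fun z =>
    ENNReal.ofReal (c * exp (-(w / (w + 1) * t)) * exp (-(t * (w + 1)) * ‖z‖ ^ 2)))]
  have hc' : 0 ≤ c * exp (-(w / (w + 1) * t)) := by positivity
  simp_rw [ENNReal.ofReal_mul hc']
  rw [lintegral_const_mul _ (by fun_prop),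
    lint_of_real (c := (π / (t * (w + 1))) ^ ((9:ℝ) / 2))]
  · exact Filter.Eventually.of_forall fun z => (exp_pos _).le
  · rw [GaussianFourier.integral_rexp_neg_mul_sq_norm hb]
    simp
  · positivity

noncomputable def F (e : E9) (q : ℝ) (z : E9) (x : ℝ × ℝ) : ℝ :=
  (x.1 ^ (5 / 2 + q) * x.2 ^ (q - 1)) *
    (exp (-(‖z - e‖ ^ 2 * x.1)) * exp (-(x.1 * ‖z‖ ^ 2 * x.2)))

noncomputable def ν : Measure (ℝ × ℝ) :=
  ((volume : Measure ℝ).restrict (Ioi 0)).prod ((volume : Measure ℝ).restrict (Ioi 0))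

instance : SFinite ν := by unfold ν; infer_instance

lemma measF (e : E9) (q : ℝ) :
    Measurable (fun y : E9 × (ℝ × ℝ) => ENNReal.ofReal (F e q y.1 y.2)) := by
  unfold F; fun_prop

lemma lemA (e : E9) {q : ℝ} (hq : 0 < q) {z : E9} (hz : z ≠ 0) (hze : z ≠ e) :
    ∫⁻ x, ENNReal.ofReal (F e q z x) ∂ν =
      ENNReal.ofReal (Gamma (7 / 2) * Gamma q) *
        ENNReal.ofReal (‖z - e‖ ^ (-(7:ℝ)) * ‖z‖ ^ (-(2 * q))) := by
  have hn : 0 < ‖z‖ := norm_pos_iff.2 hz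
  have hn' : 0 < ‖z - e‖ := norm_pos_iff.2 (sub_ne_zero.2 hze)
  have hG := Gamma_pos_of_pos hq
  have hG' := Gamma_pos_of_pos (show (0:ℝ) < 7 / 2 by norm_num)
  rw [ν, lintegral_prod (fun x => ENNReal.ofReal (F e q z x))
    ((measF e q).comp measurable_prodMk_left).aemeasurable]
  rw [← ENNReal.ofReal_mul (by positivity)]
  have h1 : ∀ t ∈ Ioi (0:ℝ), ∫⁻ w in Ioi (0:ℝ), ENNReal.ofReal (F e q z (t, w)) =
      ENNReal.ofReal ((‖z‖ ^ (-(2 * q)) * Gamma q) *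
        (t ^ ((7:ℝ) / 2 - 1) * exp (-(‖z - e‖ ^ 2 * t)))) := by
    intro t (ht : 0 < t)
    have := lint_gamma (a := q) (r := t * ‖z‖ ^ 2)
      (c := t ^ (5 / 2 + q) * exp (-(‖z - e‖ ^ 2 * t))) hq (by positivity) (by positivity)
    convert this using 2
    · ext w; simp only [F]; congr 1; ring
    · rw [one_div, inv_rpow (by positivity), mul_rpow ht.le (by positivity), rpow_add ht,
        ← rpow_natCast ‖z‖, ← rpow_mul hn.le, rpow_neg hn.le]
      have := (rpow_pos_of_pos ht q).ne'
      norm_num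
      field_simp
  rw [setLIntegral_congr_fun measurableSet_Ioi h1, lint_gamma (by norm_num) (by positivity)
    (by positivity)]
  congr 1
  rw [one_div, inv_rpow (by positivity), ← rpow_natCast, ← rpow_mul hn'.le,
    rpow_neg hn'.le]
  norm_num
  ring

lemma lemC (e : E9) (he : ‖e‖ = 1) {q : ℝ} (hq : 1 < q) (hq' : q < 9 / 2) :
    ∫⁻ x, ∫⁻ z, ENNReal.ofReal (F e q z x) ∂(volume : Measure E9) ∂ν =
      ENNReal.ofReal (π ^ ((9:ℝ) / 2) * Gamma (q - 1) * (1 / (9 / 2 - q))) := by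
  have hG := Gamma_pos_of_pos (sub_pos.2 hq)
  rw [ν, lintegral_prod_symm _ (measF e q).lintegral_prod_left'.aemeasurable]
  have h1 : ∀ w ∈ Ioi (0:ℝ), ∫⁻ t in Ioi (0:ℝ), ∫⁻ z, ENNReal.ofReal (F e q z (t, w)) =
      ENNReal.ofReal ((π ^ ((9:ℝ) / 2) * Gamma (q - 1)) * (w + 1) ^ (q - 11 / 2)) := by
    intro w (hw : 0 < w)
    have hw1 : 0 < w + 1 := by linarith
    have h2 : ∀ t ∈ Ioi (0:ℝ), ∫⁻ z, ENNReal.ofReal (F e q z (t, w)) =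
        ENNReal.ofReal ((w ^ (q - 1) * π ^ ((9:ℝ) / 2) * (w + 1) ^ (-((9:ℝ) / 2))) *
          (t ^ (q - 1 - 1) * exp (-(w / (w + 1) * t)))) := by
      intro t (ht : 0 < t)
      have := lint_gauss e he (c := t ^ (5 / 2 + q) * w ^ (q - 1)) ht hw (by positivity)
      refine Eq.trans this ?_
      congr 1
      rw [div_rpow pi_pos.le (by positivity), mul_rpow ht.le hw1.le,
        show q - 1 - 1 = (5 / 2 + q) - 9 / 2 by ring, rpow_sub ht, rpow_neg hw1.le]
      field_simp
    rw [setLIntegral_congr_fun measurableSet_Ioi h2, lint_gamma (by linarith) (by positivity)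
      (by positivity)]
    congr 1
    rw [one_div, inv_div, div_rpow hw1.le hw.le,
      show q - 11 / 2 = (q - 1) + -(9 / 2) by ring, rpow_add hw1]
    have := (rpow_pos_of_pos hw (q - 1)).ne'
    field_simp
  rw [setLIntegral_congr_fun measurableSet_Ioi h1, lint_pow (by linarith) (by positivity)]
  congr 2
  rw [show q - 11 / 2 + 1 = -(9 / 2 - q) by ring, neg_div_neg_eq]

end NewtonAux

open NewtonAux in
/-- For a unit vector `e` of `ℝ⁹` and `0 ≤ p < 6`, the function
`z ↦ ‖z − e‖⁻⁷ ‖z‖^{p−8}` is Lebesgue-integrable on `ℝ⁹` and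
`(3 Γ(7/2) / (2 π^{9/2})) ∫ ‖z − e‖⁻⁷ ‖z‖^{p−8} dz = (6/7)(1/(p+1) + 1/(6−p))`. -/
theorem integral_newtonian_kernel_rpow_dim9
    (e : EuclideanSpace ℝ (Fin 9)) (he : ‖e‖ = 1)
    (p : ℝ) (hp0 : 0 ≤ p) (hp6 : p < 6) :
    Integrable (fun z : EuclideanSpace ℝ (Fin 9) =>
      ‖z - e‖ ^ (-(7 : ℝ)) * ‖z‖ ^ (p - 8)) ∧
    (3 * Real.Gamma (7 / 2) / (2 * Real.pi ^ ((9 : ℝ) / 2))) *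
        (∫ z : EuclideanSpace ℝ (Fin 9), ‖z - e‖ ^ (-(7 : ℝ)) * ‖z‖ ^ (p - 8)) =
      (6 / 7) * (1 / (p + 1) + 1 / (6 - p)) := by
  set f : E9 → ℝ := fun z => ‖z - e‖ ^ (-(7 : ℝ)) * ‖z‖ ^ (p - 8) with hf
  have hfm : Measurable f := by fun_prop
  have hf0 : ∀ z, 0 ≤ f z := fun z => by simp only [hf]; positivity
  obtain ⟨q, hq⟩ : ∃ q, q = 4 - p / 2 := ⟨_, rfl⟩
  have hG := Real.Gamma_pos_of_pos (show 0 < q - 1 by linarith)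
  have hGq : Real.Gamma q = (q - 1) * Real.Gamma (q - 1) := by
    rw [← Real.Gamma_add_one (by linarith)]; ring_nf
  have hG' := Real.Gamma_pos_of_pos (show (0:ℝ) < 7 / 2 by norm_num)
  have hπ := Real.rpow_pos_of_pos Real.pi_pos ((9:ℝ) / 2)
  set A := Real.Gamma (7 / 2) * Real.Gamma q with hA
  have hq1 : 0 < q - 1 := by linarith
  have hApos : 0 < A := by rw [hA, hGq]; positivity
  have h1 : ENNReal.ofReal A * ∫⁻ z, ENNReal.ofReal (f z) =
      ENNReal.ofReal (Real.pi ^ ((9:ℝ) / 2) * Real.Gamma (q - 1) * (1 / (9 / 2 - q))) := by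
    rw [← lemC e he (by linarith) (by linarith), lintegral_lintegral_swap
      (f := fun x z => ENNReal.ofReal (F e q z x)) ((measF e q).comp measurable_swap).aemeasurable,
      ← lintegral_const_mul _ (by fun_prop)]
    refine lintegral_congr_ae ?_
    have hz0 : ∀ᵐ z : E9, z ≠ 0 := by simp [ae_iff]
    have hze : ∀ᵐ z : E9, z ≠ e := by simp [ae_iff]
    filter_upwards [hz0, hze] with z h0 h1
    rw [lemA e (by linarith) h0 h1, show -(2 * q) = p - 8 by rw [hq]; ring]
  have h2 : ∫⁻ z, ENNReal.ofReal (f z) = ENNReal.ofReal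
      (Real.pi ^ ((9:ℝ) / 2) * Real.Gamma (q - 1) * (1 / (9 / 2 - q)) / A) := by
    rw [ENNReal.ofReal_div_of_pos hApos, ← h1, mul_comm, ENNReal.mul_div_cancel_right]
    · simpa using hApos
    · exact ENNReal.ofReal_ne_top
  have hq9 : 0 < 9 / 2 - q := by linarith
  refine ⟨⟨hfm.aestronglyMeasurable, ?_⟩, ?_⟩
  · rw [hasFiniteIntegral_iff_ofReal (Filter.Eventually.of_forall hf0), h2]
    exact ENNReal.ofReal_lt_top
  · rw [integral_eq_lintegral_of_nonneg_ae (Filter.Eventually.of_forall hf0)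
      hfm.aestronglyMeasurable, h2, ENNReal.toReal_ofReal (by positivity), hA, hGq]
    have e1 : q - 1 = (6 - p) / 2 := by rw [hq]; ring
    have e2 : 9 / 2 - q = (p + 1) / 2 := by rw [hq]; ring
    have h6 : 6 - p ≠ 0 := by linarith
    have h7 : p + 1 ≠ 0 := by linarith
    generalize hg : Real.Gamma (q - 1) = g at *
    rw [e1, e2]
    field_simp
    ring
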